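/- Let q be a complex number with 0 < |q| < 1, fix a square root q^{1/2} of q, and let a be a complex number with |a| < 1. Then ∫₀^π h(cos θ; 1, -1, q^{1/2}, -q^{1/2}) / h(cos θ; a) dθ = 2π / (q; q)_∞. -/

import Mathlib

open Complex MeasureTheory

/-- The q-shifted factorial `(x; q)_∞ = ∏_{k=0}^∞ (1 - x q^k)`. -/
noncomputable def qp (q x : ℂ) : ℂ := ∏' k : ℕ, (1 - x * q ^ k)

/-- The finite q-shifted factorial `(x; q)_n = ∏_{k=0}^{n-1} (1 - x q^k)`. -/
noncomputable def qpn (q x : ℂ) (n : ℕ) : ℂ := ∏ k ∈ Finset.range n, (1 - x * q ^ k)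

/-- For `x = cos θ`, `h(x; λ) = (λ e^{iθ}; q)_∞ (λ e^{-iθ}; q)_∞`. -/
noncomputable def hh (q : ℂ) (θ : ℝ) (l : ℂ) : ℂ :=
  qp q (l * Complex.exp ((θ : ℂ) * Complex.I)) *
    qp q (l * Complex.exp (-((θ : ℂ) * Complex.I)))

/-!
With `θ(x; q) = (x; q)_∞ (q / x; q)_∞` and `z = e^{iϑ}`, the numerator of the integrand is
`θ(z²; q) + θ(z⁻²; q)`, so the integral is `2π J(a)`, where `J(a) = K(a, a)` and `K(a, b)` is the
average over the unit circle of `θ(z²; q) / ((a z; q)_∞ (b / z; q)_∞)`.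

The difference of the integrands of `K(a, a q)` and `K(a, a)` is odd under `z ↦ z⁻¹`, so
`J(a) = K(a, a q)`. As `θ(q x; q) = θ(x⁻¹; q)`, replacing `z` by `q^{1/2} z⁻¹` in `K(a, a q)`
gives `J(a q^{1/2})`; the contour moves through a region free of poles. Iterating,
`J(a) = J(a q^{n/2}) → J(0)`, the average of `θ(z²; q)`, that is, of `θ(z; q)`.

For that constant term, let `I(b)` be the average of `θ(z; q) / (b / z; q)_∞`. Replacing `z` by
`q z` gives `I(b) = (1 - b) I(b q)`, hence `I(q) = (q; q)_∞ I(0)`; and `I(q)` is the average of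
the entire function `(z; q)_∞`, which is its value `1` at the origin.
-/

open Filter Function Metric Real Set Topology

section CircleAverage

variable {E : Type*} [NormedAddCommGroup E]

lemma continuousOn_circleAverage [NormedSpace ℝ E] {X : Type*} [TopologicalSpace X] {s : Set X}
    {K : X → ℂ → E} {c : ℂ} {R : ℝ} (hK : ContinuousOn (uncurry K) (s ×ˢ sphere c |R|)) :
    ContinuousOn (fun x ↦ circleAverage (K x) c R) s := by
  rw [continuousOn_iff_continuous_domRestrict]
  have continuous_uncurry : Continuous fun p : s × ℝ ↦ K p.1 (circleMap c R p.2) :=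
    hK.comp_continuous (f := fun p : s × ℝ ↦ ((p.1 : X), circleMap c R p.2)) (by fun_prop)
      fun p ↦ ⟨p.1.2, circleMap_mem_sphere' c R p.2⟩
  exact (intervalIntegral.continuous_parametric_intervalIntegral_of_continuous'
    continuous_uncurry 0 (2 * π)).const_smul _

lemma intervalIntegrable_comp_circleMap {f : ℂ → E} {c : ℂ} {R : ℝ}
    (hf : CircleIntegrable f c R) (a b : ℝ) :
    IntervalIntegrable (fun θ ↦ f (circleMap c R θ)) volume a b :=
  ((periodic_circleMap c R).comp f).intervalIntegrable₀ two_pi_pos.ne' hf a b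

lemma circleAverage_comp_const_mul [NormedSpace ℝ E] (f : ℂ → E) (ζ : ℂ) :
    circleAverage (fun z ↦ f (ζ * z)) 0 1 = circleAverage f 0 ‖ζ‖ := by
  rw [circleAverage_eq_integral_add (f := f) (arg ζ), circleAverage_def]
  congr with θ
  nth_rewrite 1 [← norm_mul_exp_arg_mul_I ζ]
  simp only [circleMap, zero_add, ofReal_one, one_mul, ofReal_add, add_mul, Complex.exp_add]
  ring_nf

lemma circleAverage_comp_pow [NormedSpace ℝ E] {f : ℂ → E} (hf : CircleIntegrable f 0 1)
    {n : ℕ} (hn : n ≠ 0) :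
    circleAverage (fun z ↦ f (z ^ n)) 0 1 = circleAverage f 0 1 := by
  have periodic : Periodic (fun θ : ℝ ↦ f (circleMap 0 1 θ)) (2 * π) :=
    (periodic_circleMap 0 1).comp f
  have pow_circleMap (θ : ℝ) : circleMap 0 1 θ ^ n = circleMap 0 1 (n * θ) := by
    simp [circleMap, ← Complex.exp_nat_mul, mul_assoc]
  have n_turns := periodic.intervalIntegral_add_zsmul_eq n 0
    (intervalIntegrable_comp_circleMap hf)
  simp only [zero_add, zsmul_eq_mul, Int.cast_natCast, natCast_zsmul] at n_turns
  simp only [circleAverage_def, pow_circleMap]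
  rw [intervalIntegral.integral_comp_mul_left (fun θ ↦ f (circleMap 0 1 θ))
    (Nat.cast_ne_zero.mpr hn), mul_zero, n_turns, ← Nat.cast_smul_eq_nsmul ℝ,
    inv_smul_smul₀ (Nat.cast_ne_zero.mpr hn)]

lemma integral_zero_pi_add_inv_eq_circleAverage [NormedSpace ℝ E] {f : ℂ → E}
    (hf : CircleIntegrable f 0 1) :
    ∫ θ in 0..π, (f (circleMap 0 1 θ) + f (circleMap 0 1 θ)⁻¹) =
      (2 * π) • circleAverage f 0 1 := by
  have periodic : Periodic (fun θ : ℝ ↦ f (circleMap 0 1 θ)) (2 * π) :=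
    (periodic_circleMap 0 1).comp f
  have integrable := intervalIntegrable_comp_circleMap hf
  have integrable_neg : IntervalIntegrable (fun θ ↦ f (circleMap 0 1 (-θ))) volume 0 π := by
    simpa using (integrable 0 (-π)).comp_sub_left 0
  have full_turn := periodic.intervalIntegral_add_eq (-π) 0
  rw [zero_add, show -π + 2 * π = π by ring] at full_turn
  simp only [circleMap_zero_inv, inv_one]
  rw [intervalIntegral.integral_add (integrable 0 π) integrable_neg,
    intervalIntegral.integral_comp_neg (fun θ ↦ f (circleMap 0 1 θ)), neg_zero, add_comm,
    intervalIntegral.integral_add_adjacent_intervals (integrable _ _) (integrable _ _),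
    full_turn, circleAverage_def, smul_inv_smul₀ (by positivity)]

lemma circleAverage_eq_zero_of_odd_inv [NormedSpace ℝ E] {f : ℂ → E}
    (hf : ∀ z ∈ sphere (0 : ℂ) 1, f z⁻¹ = -f z) : circleAverage f 0 1 = 0 := by
  have h : circleAverage f 0 1 = -circleAverage f 0 1 := by
    calc circleAverage f 0 1 = circleAverage (f ·⁻¹) 0 1 := circleAverage_zero_one_congr_inv.symm
      _ = circleAverage (fun z ↦ (-1 : ℝ) • f z) 0 1 :=
        circleAverage_congr_sphere (by simpa [EqOn] using hf)
      _ = -circleAverage f 0 1 := by rw [circleAverage_fun_smul, neg_one_smul]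
  have : IsAddTorsionFree E := .of_isTorsionFree ℝ E
  exact self_eq_neg.mp h

variable [NormedSpace ℂ E] {f : ℂ → E}

lemma circleAverage_eq_of_differentiableOn_annulus {c : ℂ} {r R : ℝ} (hr : 0 < r) (hrR : r ≤ R)
    (hf : DifferentiableOn ℂ f (closedBall c R \ ball c r)) :
    circleAverage f c r = circleAverage f c R := by
  rw [circleAverage_eq_circleIntegral hr.ne', circleAverage_eq_circleIntegral (hr.trans_le hrR).ne',
    circleIntegral_sub_center_inv_smul_eq_of_differentiable_on_annulus_off_countable hr hrR
      countable_empty hf.continuousOn]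
  rintro z ⟨hz, -⟩
  have annulus_mem_nhds : ball c R \ closedBall c r ∈ 𝓝 z :=
    (isOpen_ball.sdiff isClosed_closedBall).mem_nhds hz
  exact hf.differentiableAt (mem_of_superset annulus_mem_nhds
    (sdiff_subset_sdiff ball_subset_closedBall ball_subset_closedBall))

lemma circleAverage_comp_const_mul_eq_of_differentiableOn_annulus {ζ : ℂ} (hζ0 : ζ ≠ 0)
    (hζ : ‖ζ‖ ≤ 1) (hf : DifferentiableOn ℂ f (closedBall 0 1 \ ball 0 ‖ζ‖)) :
    circleAverage (fun z ↦ f (ζ * z)) 0 1 = circleAverage f 0 1 := by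
  rw [circleAverage_comp_const_mul,
    circleAverage_eq_of_differentiableOn_annulus (norm_pos_iff.mpr hζ0) hζ hf]

end CircleAverage

lemma norm_mul_lt_one {R : Type*} [SeminormedRing R] {x y : R} (hx : ‖x‖ < 1) (hy : ‖y‖ ≤ 1) :
    ‖x * y‖ < 1 :=
  (norm_mul_le x y).trans_lt (mul_lt_one_of_nonneg_of_lt_one_left (norm_nonneg x) hx hy)

lemma norm_mul_pow_lt_one {R : Type*} [SeminormedRing R] [NormOneClass R] {x y : R}
    (hx : ‖x‖ < 1) (hy : ‖y‖ ≤ 1) (n : ℕ) : ‖x * y ^ n‖ < 1 :=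
  norm_mul_lt_one hx ((norm_pow_le y n).trans (pow_le_one₀ (norm_nonneg y) hy))

lemma norm_mul_mul_inv_lt_one {K : Type*} [NormedDivisionRing K] {x y z : K} (hx : ‖x‖ < 1)
    (hyz : ‖y‖ ≤ ‖z‖) : ‖x * y * z⁻¹‖ < 1 := by
  rw [mul_assoc, ← div_eq_mul_inv]
  exact norm_mul_lt_one hx (by simpa using div_le_one_of_le₀ hyz (norm_nonneg z))

lemma eq_tprod_mul_of_eq_mul_comp_mul {F c : ℂ → ℂ} {q b : ℂ} (hq : ‖q‖ < 1) (hb : ‖b‖ < 1)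
    (hF : ContinuousAt F 0) (hrec : ∀ x, ‖x‖ < 1 → F x = c x * F (x * q))
    (hc : Multipliable fun k : ℕ ↦ c (b * q ^ k)) :
    F b = (∏' k : ℕ, c (b * q ^ k)) * F 0 := by
  have iterate (n : ℕ) : F b = (∏ k ∈ Finset.range n, c (b * q ^ k)) * F (b * q ^ n) := by
    induction n with
    | zero => simp
    | succ n ih =>
      rw [ih, hrec _ (norm_mul_pow_lt_one hb hq.le n), Finset.prod_range_succ, pow_succ]
      ring_nf
  have tendsto_zero : Tendsto (fun n : ℕ ↦ b * q ^ n) atTop (𝓝 0) := by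
    simpa using (tendsto_pow_atTop_nhds_zero_of_norm_lt_one hq).const_mul b
  exact tendsto_nhds_unique (tendsto_const_nhds.congr iterate)
    (hc.hasProd.tendsto_prod_nat.mul (hF.tendsto.comp tendsto_zero))

section QShiftedFactorial

variable {q : ℂ}

lemma qp_zero_right (q : ℂ) : qp q 0 = 1 := by simp [qp]

lemma summable_norm_mul_pow (hq : ‖q‖ < 1) (x : ℂ) : Summable fun k : ℕ ↦ ‖-(x * q ^ k)‖ := by
  simpa using (summable_geometric_of_lt_one (norm_nonneg q) hq).mul_left ‖x‖

lemma multipliable_one_sub_mul_pow (hq : ‖q‖ < 1) (x : ℂ) :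
    Multipliable fun k : ℕ ↦ 1 - x * q ^ k := by
  simpa [sub_eq_add_neg] using multipliable_one_add_of_summable (summable_norm_mul_pow hq x)

lemma qp_eq_one_sub_mul_qp (hq : ‖q‖ < 1) (x : ℂ) : qp q x = (1 - x) * qp q (x * q) := by
  have shift (k : ℕ) : x * q ^ (k + 1) = x * q * q ^ k := by ring
  simp only [qp]
  rw [tprod_eq_zero_mul' (by simpa only [shift] using multipliable_one_sub_mul_pow hq (x * q))]
  simp only [shift, pow_zero, mul_one]

lemma qp_ne_zero (hq : ‖q‖ < 1) {x : ℂ} (hx : ‖x‖ < 1) : qp q x ≠ 0 := by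
  simp only [qp, sub_eq_add_neg]
  refine tprod_one_add_ne_zero_of_summable (fun k hk ↦ ?_) (summable_norm_mul_pow hq x)
  have norm_lt := norm_mul_pow_lt_one hx hq.le k
  rw [← sub_eq_add_neg, sub_eq_zero] at hk
  simp [← hk] at norm_lt

lemma inv_qp_mul_right (hq : ‖q‖ < 1) {x : ℂ} (hx : ‖x‖ < 1) :
    (qp q (x * q))⁻¹ = (1 - x) * (qp q x)⁻¹ := by
  have hrec := qp_eq_one_sub_mul_qp hq x
  have hfac : 1 - x ≠ 0 := left_ne_zero_of_mul (hrec ▸ qp_ne_zero hq hx)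
  rw [hrec, mul_inv, mul_inv_cancel_left₀ hfac]

lemma hasProdLocallyUniformlyOn_qp (hq : ‖q‖ < 1) :
    HasProdLocallyUniformlyOn (fun (k : ℕ) (x : ℂ) ↦ 1 + -(x * q ^ k)) (qp q) univ := by
  unfold qp
  simp only [sub_eq_add_neg]
  refine hasProdLocallyUniformlyOn_of_forall_compact isOpen_univ fun K _ hK ↦ ?_
  obtain ⟨C, hC⟩ := hK.isBounded.exists_norm_le
  refine Summable.hasProdUniformlyOn_nat_one_add (u := fun k ↦ C * ‖q‖ ^ k) hK
    ((summable_geometric_of_lt_one (norm_nonneg q) hq).mul_left C) (.of_forall fun k x hx ↦ ?_)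
    (by fun_prop)
  rw [norm_neg, norm_mul, norm_pow]
  gcongr
  exact hC x hx

lemma differentiable_qp (hq : ‖q‖ < 1) : Differentiable ℂ (qp q) := by
  rw [← differentiableOn_univ]
  exact (hasProdLocallyUniformlyOn_iff_tendstoLocallyUniformlyOn.mp
    (hasProdLocallyUniformlyOn_qp hq)).differentiableOn (.of_forall fun s ↦ by fun_prop) isOpen_univ

lemma qp_mul_qp_neg (hq : ‖q‖ < 1) (x : ℂ) : qp q x * qp q (-x) = qp (q ^ 2) (x ^ 2) := by
  simp only [qp]
  rw [← (multipliable_one_sub_mul_pow hq x).tprod_mul (multipliable_one_sub_mul_pow hq (-x))]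
  congr with k
  ring

lemma qp_sq_mul_qp_sq (hq : ‖q‖ < 1) (x : ℂ) :
    qp (q ^ 2) x * qp (q ^ 2) (x * q) = qp q x := by
  have even (k : ℕ) : 1 - x * (q ^ 2) ^ k = 1 - x * q ^ (2 * k) := by rw [pow_mul]
  have odd (k : ℕ) : 1 - x * q * (q ^ 2) ^ k = 1 - x * q ^ (2 * k + 1) := by ring
  have hq2 : ‖q ^ 2‖ < 1 := by simpa using pow_lt_one₀ (norm_nonneg q) hq two_ne_zero
  simp only [qp, even, odd]
  exact tprod_even_mul_odd (f := fun k ↦ 1 - x * q ^ k)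
    (by simpa only [even] using multipliable_one_sub_mul_pow hq2 x)
    (by simpa only [odd] using multipliable_one_sub_mul_pow hq2 (x * q))

lemma qp_mul_neg_mul_sqrt_mul_neg_sqrt {u : ℂ} (hq : ‖q‖ < 1) (hu : u ^ 2 = q) (x : ℂ) :
    qp q x * qp q (-x) * (qp q (u * x) * qp q (-(u * x))) = qp q (x ^ 2) := by
  rw [qp_mul_qp_neg hq, qp_mul_qp_neg hq, mul_pow, hu, mul_comm q, qp_sq_mul_qp_sq hq]

end QShiftedFactorial

section Theta

variable {q : ℂ}

/-- The modified Jacobi theta function `θ(x; q) = (x; q)_∞ (q / x; q)_∞`. At `x = 0`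
it takes the junk value `1`. -/
noncomputable def qTheta (q x : ℂ) : ℂ := qp q x * qp q (x⁻¹ * q)

lemma qTheta_mul_left (hq0 : q ≠ 0) (x : ℂ) : qTheta q (q * x) = qTheta q x⁻¹ := by
  rw [qTheta, qTheta, inv_inv, mul_inv_rev, inv_mul_cancel_right₀ hq0, mul_comm q, mul_comm]

lemma qTheta_add_qTheta_inv (hq : ‖q‖ < 1) {x : ℂ} (hx : x ≠ 0) :
    qTheta q x + qTheta q x⁻¹ = qp q x * qp q x⁻¹ := by
  rw [qTheta, qTheta, inv_inv, qp_eq_one_sub_mul_qp hq x, qp_eq_one_sub_mul_qp hq x⁻¹]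
  field_simp
  ring

lemma qTheta_inv (hq : ‖q‖ < 1) {x : ℂ} (hx : x ≠ 0) : qTheta q x⁻¹ = -x⁻¹ * qTheta q x := by
  rw [qTheta, qTheta, inv_inv, qp_eq_one_sub_mul_qp hq x, qp_eq_one_sub_mul_qp hq x⁻¹]
  field_simp
  ring

variable {E : Type*} [NormedAddCommGroup E] [NormedSpace ℂ E]

lemma differentiableAt_qTheta_comp (hq : ‖q‖ < 1) {f : E → ℂ} {x : E}
    (hf : DifferentiableAt ℂ f x) (hfx : f x ≠ 0) :
    DifferentiableAt ℂ (fun y ↦ qTheta q (f y)) x := by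
  have hqp := differentiable_qp hq
  simp only [qTheta]
  fun_prop (disch := assumption)

end Theta

section ConstantTerm

variable {q b : ℂ}

/-- The quotient `θ(z; q) / (b / z; q)_∞`, which deforms `θ` at `b = 0` into the entire function
`(z; q)_∞` at `b = q`. -/
noncomputable def qThetaQuotient (q b z : ℂ) : ℂ := qTheta q z / qp q (b * z⁻¹)

lemma qThetaQuotient_zero_left (q : ℂ) : qThetaQuotient q 0 = qTheta q := by
  ext z
  simp [qThetaQuotient, qp_zero_right]

lemma differentiableAt_qThetaQuotient {E : Type*} [NormedAddCommGroup E] [NormedSpace ℂ E]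
    (hq : ‖q‖ < 1) {f g : E → ℂ} {x : E} (hf : DifferentiableAt ℂ f x)
    (hg : DifferentiableAt ℂ g x) (hgx : g x ≠ 0) (hfg : ‖f x * (g x)⁻¹‖ < 1) :
    DifferentiableAt ℂ (fun y ↦ qThetaQuotient q (f y) (g y)) x := by
  have hqp := differentiable_qp hq
  have hθ := differentiableAt_qTheta_comp hq hg hgx
  have hden := qp_ne_zero hq hfg
  simp only [qThetaQuotient]
  fun_prop (disch := assumption)

lemma circleIntegrable_qThetaQuotient (hq : ‖q‖ < 1) (hb : ‖b‖ < 1) :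
    CircleIntegrable (qThetaQuotient q b) 0 1 := by
  refine ContinuousOn.circleIntegrable zero_le_one fun z hz ↦ ?_
  rw [mem_sphere_zero_iff_norm] at hz
  exact (differentiableAt_qThetaQuotient hq (differentiableAt_const b) differentiableAt_fun_id
    (norm_ne_zero_iff.mp (by simp [hz])) (by simpa [hz])).continuousAt.continuousWithinAt

lemma continuousAt_circleAverage_qThetaQuotient (hq : ‖q‖ < 1) :
    ContinuousAt (fun b ↦ circleAverage (qThetaQuotient q b) 0 1) 0 := by
  refine (continuousOn_circleAverage ?_).continuousAt (ball_mem_nhds 0 one_pos)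
  rintro ⟨b, z⟩ ⟨hb, hz⟩
  rw [mem_ball_zero_iff] at hb
  rw [abs_one, mem_sphere_zero_iff_norm] at hz
  exact (differentiableAt_qThetaQuotient hq differentiableAt_fst differentiableAt_snd
    (norm_ne_zero_iff.mp (by simp [hz])) (by simpa [hz])).continuousAt.continuousWithinAt

lemma circleAverage_qThetaQuotient_mul_left (hq0 : q ≠ 0) (hq : ‖q‖ < 1) (hb : ‖b‖ < 1) :
    circleAverage (fun z ↦ qThetaQuotient q (b * q) (q * z)) 0 1 =
      circleAverage (qThetaQuotient q (b * q)) 0 1 := by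
  refine circleAverage_comp_const_mul_eq_of_differentiableOn_annulus hq0 hq.le fun z hz ↦ ?_
  simp only [Set.mem_sdiff, mem_closedBall_zero_iff, mem_ball_zero_iff, not_lt] at hz
  have z_pos : 0 < ‖z‖ := (norm_pos_iff.mpr hq0).trans_le hz.2
  exact (differentiableAt_qThetaQuotient hq (differentiableAt_const _) differentiableAt_fun_id
    (norm_pos_iff.mp z_pos) (norm_mul_mul_inv_lt_one hb hz.2)).differentiableWithinAt

lemma circleAverage_qThetaQuotient_eq_one_sub_mul (hq0 : q ≠ 0) (hq : ‖q‖ < 1) (hb : ‖b‖ < 1) :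
    circleAverage (qThetaQuotient q b) 0 1 =
      (1 - b) * circleAverage (qThetaQuotient q (b * q)) 0 1 := by
  have pointwise : EqOn (fun z ↦ b • qThetaQuotient q (b * q) (q * z))
      (fun z ↦ qThetaQuotient q (b * q) z - qThetaQuotient q b z) (sphere 0 |1|) := by
    intro z hz
    rw [abs_one, mem_sphere_zero_iff_norm] at hz
    have hz0 : z ≠ 0 := norm_ne_zero_iff.mp (by simp [hz])
    have arg_shift : b * q * (q * z)⁻¹ = b * z⁻¹ := by field_simp
    simp only [qThetaQuotient, arg_shift, mul_right_comm b q, qTheta_mul_left hq0,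
      qTheta_inv hq hz0, div_eq_mul_inv, inv_qp_mul_right hq (show ‖b * z⁻¹‖ < 1 by simpa [hz]),
      smul_eq_mul]
    ring
  have averaged := circleAverage_congr_sphere pointwise
  rw [circleAverage_fun_smul, circleAverage_qThetaQuotient_mul_left hq0 hq hb,
    circleAverage_fun_sub (circleIntegrable_qThetaQuotient hq (norm_mul_lt_one hb hq.le))
      (circleIntegrable_qThetaQuotient hq hb), smul_eq_mul] at averaged
  linear_combination averaged

lemma circleAverage_qThetaQuotient_self (hq : ‖q‖ < 1) :
    circleAverage (qThetaQuotient q q) 0 1 = 1 := by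
  have pointwise : EqOn (qThetaQuotient q q) (qp q) (sphere 0 |1|) := by
    intro z hz
    rw [abs_one, mem_sphere_zero_iff_norm] at hz
    rw [qThetaQuotient, qTheta, mul_comm q, mul_div_cancel_right₀ _ (qp_ne_zero hq (by simpa [hz]))]
  rw [circleAverage_congr_sphere pointwise, (differentiable_qp hq).diffContOnCl.circleAverage,
    qp_zero_right]

lemma circleAverage_qTheta (hq0 : q ≠ 0) (hq : ‖q‖ < 1) :
    circleAverage (qTheta q) 0 1 = (qp q q)⁻¹ := by
  have product := eq_tprod_mul_of_eq_mul_comp_mul hq hq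
    (continuousAt_circleAverage_qThetaQuotient hq)
    (fun b hb ↦ circleAverage_qThetaQuotient_eq_one_sub_mul hq0 hq hb)
    (multipliable_one_sub_mul_pow hq q)
  rw [circleAverage_qThetaQuotient_self hq, qThetaQuotient_zero_left] at product
  exact eq_inv_of_mul_eq_one_right product.symm

end ConstantTerm

section HermiteKernel

variable {q u a b : ℂ}

/-- The kernel `θ(z²; q) / ((a z; q)_∞ (b / z; q)_∞)`. For `a = b` it is one half of the weight of
the continuous `q`-Hermite polynomials times their generating function: adding its value at `z⁻¹`
gives the integrand of the theorem. Unequal parameters occur when the contour is shifted. -/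
noncomputable def qHermiteKernel (q a b z : ℂ) : ℂ :=
  qTheta q (z ^ 2) / (qp q (a * z) * qp q (b * z⁻¹))

lemma differentiableAt_qHermiteKernel {E : Type*} [NormedAddCommGroup E] [NormedSpace ℂ E]
    (hq : ‖q‖ < 1) {f g w : E → ℂ} {x : E} (hf : DifferentiableAt ℂ f x)
    (hg : DifferentiableAt ℂ g x) (hw : DifferentiableAt ℂ w x) (hwx : w x ≠ 0)
    (hfw : ‖f x * w x‖ < 1) (hgw : ‖g x * (w x)⁻¹‖ < 1) :
    DifferentiableAt ℂ (fun y ↦ qHermiteKernel q (f y) (g y) (w y)) x := by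
  have hqp := differentiable_qp hq
  have hθ := differentiableAt_qTheta_comp hq (hw.fun_pow 2) (pow_ne_zero 2 hwx)
  have hden := mul_ne_zero (qp_ne_zero hq hfw) (qp_ne_zero hq hgw)
  simp only [qHermiteKernel]
  fun_prop (disch := assumption)

lemma circleIntegrable_qHermiteKernel (hq : ‖q‖ < 1) (ha : ‖a‖ < 1) (hb : ‖b‖ < 1) :
    CircleIntegrable (qHermiteKernel q a b) 0 1 := by
  refine ContinuousOn.circleIntegrable zero_le_one fun z hz ↦ ?_
  rw [mem_sphere_zero_iff_norm] at hz
  exact (differentiableAt_qHermiteKernel hq (differentiableAt_const a) (differentiableAt_const b)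
    differentiableAt_fun_id (norm_ne_zero_iff.mp (by simp [hz])) (by simpa [hz])
    (by simpa [hz])).continuousAt.continuousWithinAt

lemma continuousAt_circleAverage_qHermiteKernel (hq : ‖q‖ < 1) :
    ContinuousAt (fun a ↦ circleAverage (qHermiteKernel q a a) 0 1) 0 := by
  refine (continuousOn_circleAverage ?_).continuousAt (ball_mem_nhds 0 one_pos)
  rintro ⟨a, z⟩ ⟨ha, hz⟩
  rw [mem_ball_zero_iff] at ha
  rw [abs_one, mem_sphere_zero_iff_norm] at hz
  exact (differentiableAt_qHermiteKernel hq differentiableAt_fst differentiableAt_fst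
    differentiableAt_snd (norm_ne_zero_iff.mp (by simp [hz])) (by simpa [hz])
    (by simpa [hz])).continuousAt.continuousWithinAt

lemma qHermiteKernel_inv (hq : ‖q‖ < 1) {z : ℂ} (hz : z ≠ 0) :
    qHermiteKernel q a b z⁻¹ = -(z ^ 2)⁻¹ * qHermiteKernel q b a z := by
  rw [qHermiteKernel, qHermiteKernel, inv_pow, inv_inv, qTheta_inv hq (pow_ne_zero 2 hz)]
  ring

lemma qHermiteKernel_mul_right (hq : ‖q‖ < 1) {z : ℂ} (hbz : ‖b * z⁻¹‖ < 1) :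
    qHermiteKernel q a (b * q) z = (1 - b * z⁻¹) * qHermiteKernel q a b z := by
  rw [qHermiteKernel, qHermiteKernel, mul_right_comm b q, div_eq_mul_inv, mul_inv,
    inv_qp_mul_right hq hbz]
  ring

lemma circleAverage_qHermiteKernel_mul_right (hq : ‖q‖ < 1) (ha : ‖a‖ < 1) :
    circleAverage (qHermiteKernel q a (a * q)) 0 1 = circleAverage (qHermiteKernel q a a) 0 1 := by
  rw [← sub_eq_zero, ← circleAverage_fun_sub
    (circleIntegrable_qHermiteKernel hq ha (norm_mul_lt_one ha hq.le))
    (circleIntegrable_qHermiteKernel hq ha ha)]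
  refine circleAverage_eq_zero_of_odd_inv fun z hz ↦ ?_
  rw [mem_sphere_zero_iff_norm] at hz
  have hz0 : z ≠ 0 := norm_ne_zero_iff.mp (by simp [hz])
  rw [qHermiteKernel_mul_right hq (by simpa [hz]), qHermiteKernel_mul_right hq (by simpa [hz]),
    qHermiteKernel_inv hq hz0]
  field_simp
  ring

lemma qHermiteKernel_sqrt_mul (hq0 : q ≠ 0) (hu : u ^ 2 = q) (z : ℂ) :
    qHermiteKernel q a (a * q) (u * z) = qHermiteKernel q (a * u) (a * u) z⁻¹ := by
  have hu0 : u ≠ 0 := (pow_ne_zero_iff two_ne_zero).mp (hu ▸ hq0)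
  have arg_inv : a * q * (u * z)⁻¹ = a * u * z⁻¹ := by
    rw [← hu]
    field_simp
  rw [qHermiteKernel, qHermiteKernel, arg_inv, mul_pow, hu, qTheta_mul_left hq0, inv_inv, inv_pow,
    ← mul_assoc, mul_comm (qp q (a * u * z))]

lemma norm_lt_one_of_sq_eq (hq : ‖q‖ < 1) (hu : u ^ 2 = q) : ‖u‖ < 1 := by
  rwa [← hu, norm_pow, pow_lt_one_iff_of_nonneg (norm_nonneg u) two_ne_zero] at hq

lemma circleAverage_qHermiteKernel_sqrt_mul (hq0 : q ≠ 0) (hq : ‖q‖ < 1) (hu : u ^ 2 = q)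
    (ha : ‖a‖ < 1) :
    circleAverage (fun z ↦ qHermiteKernel q a (a * q) (u * z)) 0 1 =
      circleAverage (qHermiteKernel q a (a * q)) 0 1 := by
  have hu0 : u ≠ 0 := (pow_ne_zero_iff two_ne_zero).mp (hu ▸ hq0)
  have hu1 : ‖u‖ ≤ 1 := (norm_lt_one_of_sq_eq hq hu).le
  have norm_q_le : ‖q‖ ≤ ‖u‖ := by
    rw [← hu, norm_pow]
    exact pow_le_of_le_one (norm_nonneg u) hu1 two_ne_zero
  refine circleAverage_comp_const_mul_eq_of_differentiableOn_annulus hu0 hu1 fun z hz ↦ ?_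
  simp only [Set.mem_sdiff, mem_closedBall_zero_iff, mem_ball_zero_iff, not_lt] at hz
  have z_pos : 0 < ‖z‖ := (norm_pos_iff.mpr hu0).trans_le hz.2
  exact (differentiableAt_qHermiteKernel hq (differentiableAt_const _) (differentiableAt_const _)
    differentiableAt_fun_id (norm_pos_iff.mp z_pos) (norm_mul_lt_one ha hz.1)
    (norm_mul_mul_inv_lt_one ha (norm_q_le.trans hz.2))).differentiableWithinAt

lemma circleAverage_qHermiteKernel_mul_sqrt (hq0 : q ≠ 0) (hq : ‖q‖ < 1) (hu : u ^ 2 = q)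
    (ha : ‖a‖ < 1) :
    circleAverage (qHermiteKernel q a a) 0 1 =
      circleAverage (qHermiteKernel q (a * u) (a * u)) 0 1 := by
  calc circleAverage (qHermiteKernel q a a) 0 1
    _ = circleAverage (qHermiteKernel q a (a * q)) 0 1 :=
      (circleAverage_qHermiteKernel_mul_right hq ha).symm
    _ = circleAverage (fun z ↦ qHermiteKernel q a (a * q) (u * z)) 0 1 :=
      (circleAverage_qHermiteKernel_sqrt_mul hq0 hq hu ha).symm
    _ = circleAverage (qHermiteKernel q (a * u) (a * u)) 0 1 := by
      simp only [qHermiteKernel_sqrt_mul hq0 hu, circleAverage_zero_one_congr_inv]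

lemma circleAverage_qHermiteKernel_zero (hq0 : q ≠ 0) (hq : ‖q‖ < 1) :
    circleAverage (qHermiteKernel q 0 0) 0 1 = (qp q q)⁻¹ := by
  have at_zero : qHermiteKernel q 0 0 = fun z ↦ qTheta q (z ^ 2) := by
    ext z
    simp [qHermiteKernel, qp_zero_right]
  have integrable : CircleIntegrable (qTheta q) 0 1 := by
    simpa only [qThetaQuotient_zero_left] using
      circleIntegrable_qThetaQuotient hq (b := 0) (by simp)
  rw [at_zero, circleAverage_comp_pow integrable two_ne_zero, circleAverage_qTheta hq0 hq]

lemma circleAverage_qHermiteKernel (hq0 : q ≠ 0) (hq : ‖q‖ < 1) (hu : u ^ 2 = q)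
    (ha : ‖a‖ < 1) : circleAverage (qHermiteKernel q a a) 0 1 = (qp q q)⁻¹ := by
  have constant := eq_tprod_mul_of_eq_mul_comp_mul (c := 1) (norm_lt_one_of_sq_eq hq hu) ha
    (continuousAt_circleAverage_qHermiteKernel hq)
    (fun b hb ↦ by simpa using circleAverage_qHermiteKernel_mul_sqrt hq0 hq hu hb)
    multipliable_one
  simpa [circleAverage_qHermiteKernel_zero hq0 hq] using constant

lemma hh_eq_qp_mul_qp (q l : ℂ) (θ : ℝ) :
    hh q θ l = qp q (l * circleMap 0 1 θ) * qp q (l * (circleMap 0 1 θ)⁻¹) := by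
  simp [hh, circleMap, Complex.exp_neg]

lemma hh_div_hh_eq_qHermiteKernel_add_inv (hq : ‖q‖ < 1) (hu : u ^ 2 = q) (θ : ℝ) :
    hh q θ 1 * hh q θ (-1) * hh q θ u * hh q θ (-u) / hh q θ a =
      qHermiteKernel q a a (circleMap 0 1 θ) + qHermiteKernel q a a (circleMap 0 1 θ)⁻¹ := by
  have hz : circleMap 0 1 θ ≠ 0 := circleMap_ne_center one_ne_zero
  set z := circleMap 0 1 θ with z_def
  have numerator : hh q θ 1 * hh q θ (-1) * hh q θ u * hh q θ (-u) =
      qTheta q (z ^ 2) + qTheta q (z ^ 2)⁻¹ := by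
    rw [qTheta_add_qTheta_inv hq (pow_ne_zero 2 hz), ← inv_pow,
      ← qp_mul_neg_mul_sqrt_mul_neg_sqrt hq hu, ← qp_mul_neg_mul_sqrt_mul_neg_sqrt hq hu]
    simp only [hh_eq_qp_mul_qp, ← z_def, one_mul, neg_mul]
    ring
  rw [numerator, hh_eq_qp_mul_qp, ← z_def, qHermiteKernel, qHermiteKernel, inv_pow, inv_inv,
    mul_comm (qp q (a * z⁻¹)), add_div]

end HermiteKernel

theorem integral_step_four (q u a : ℂ) (hq0 : 0 < ‖q‖) (hq : ‖q‖ < 1) (hu : u ^ 2 = q)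
    (ha : ‖a‖ < 1) :
    ∫ θ in (0:ℝ)..Real.pi, (hh q θ 1 * hh q θ (-1) * hh q θ u * hh q θ (-u)) / hh q θ a
      = 2 * (Real.pi : ℂ) / qp q q := by
  simp only [hh_div_hh_eq_qHermiteKernel_add_inv hq hu]
  rw [integral_zero_pi_add_inv_eq_circleAverage (circleIntegrable_qHermiteKernel hq ha ha),
    circleAverage_qHermiteKernel (norm_pos_iff.mp hq0) hq hu ha]
  simp [div_eq_mul_inv]
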